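/- arXiv:2006.16425 — 5 statements merged into one kernel-verified Lean document; each statement's English description precedes it below -/
import Mathlib

section
/- Suppose (Ω,d) is a path metric space, Υ ⊆ Ω is an R-dense subset for some R > 0, and δ ≥ 0 is a constant such that for all pairs x,y ∈ Υ there are rectifiably path-connected sets L(x,y) ⊆ Ω containing x and y satisfying: (1) the sets L(x,y) form δ-slim triangles, i.e. for all x,y,z ∈ Υ, L(x,y) is contained in the δ-neighborhood of L(x,z) ∪ L(z,y); and (2) if x,y ∈ Υ have d(x,y) ≤ 3R, then the diameter of L(x,y) is at most δ. Then Ω is Gromov hyperbolic: there exists δ' ≥ 0 such that (x|z)_w ≥ min{(x|y)_w, (y|z)_w} − δ' for all x,y,z,w ∈ Ω. -/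
/-- A metric space is a *path metric space* if the distance between any two points
equals the infimum of the lengths of (continuous) paths joining them, where the
length of a path `γ : [0,1] → Ω` is its total variation. -/
def IsPathMetricSpace (Ω : Type*) [MetricSpace Ω] : Prop :=
  ∀ x y : Ω, edist x y =
    ⨅ (γ : ℝ → Ω) (_ : ContinuousOn γ (Set.Icc 0 1)) (_ : γ 0 = x) (_ : γ 1 = y),
      eVariationOn γ (Set.Icc 0 1)

/-- The Gromov product `(a|b)_c = (d(a,c) + d(b,c) - d(a,b))/2`. -/
noncomputable def gromovProd {Ω : Type*} [MetricSpace Ω] (a b c : Ω) : ℝ :=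
  (dist a c + dist b c - dist a b) / 2

/-- Approximate intermediate points in a path metric space. -/
theorem exists_between_of_path {Ω : Type*} [MetricSpace Ω] (hpath : IsPathMetricSpace Ω)
    (ε : ℝ) (hε : 0 < ε) (x y : Ω) (s : ℝ) (hs0 : 0 ≤ s) (hs : s ≤ dist x y) :
    ∃ m : Ω, dist x m = s ∧ dist m y ≤ dist x y - s + ε := by
  have h1 : (⨅ (γ : ℝ → Ω) (_ : ContinuousOn γ (Set.Icc 0 1)) (_ : γ 0 = x) (_ : γ 1 = y),
      eVariationOn γ (Set.Icc 0 1)) < ENNReal.ofReal (dist x y + ε) := by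
    rw [← hpath x y, edist_dist]
    exact (ENNReal.ofReal_lt_ofReal_iff (by positivity)).2 (by linarith)
  simp only [iInf_lt_iff] at h1
  obtain ⟨γ, hc, h0, h1, hv⟩ := h1
  have hcd : ContinuousOn (fun t => dist x (γ t)) (Set.Icc 0 1) := 
    (continuous_const.dist continuous_id).comp_continuousOn hc
  have hiv := intermediate_value_Icc (zero_le_one' ℝ) hcd
  obtain ⟨t, ht, hts⟩ := hiv (show s ∈ Set.Icc (dist x (γ 0)) (dist x (γ 1)) by
    rw [h0, h1, dist_self]; exact ⟨hs0, hs⟩)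
  refine ⟨γ t, hts, ?_⟩
  have hadd := eVariationOn.Icc_add_Icc γ ht.1 ht.2 (Set.mem_univ t)
  simp only [Set.univ_inter] at hadd
  have e1 : edist x (γ t) ≤ eVariationOn γ (Set.Icc 0 t) := by
    rw [← h0]
    exact eVariationOn.edist_le γ ⟨le_rfl, ht.1⟩ ⟨ht.1, le_rfl⟩
  have e2 : edist (γ t) y ≤ eVariationOn γ (Set.Icc t 1) := by
    rw [← h1]
    exact eVariationOn.edist_le γ ⟨le_rfl, ht.2⟩ ⟨ht.2, le_rfl⟩
  have e3 : edist x (γ t) + edist (γ t) y < ENNReal.ofReal (dist x y + ε) :=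
    lt_of_le_of_lt (hadd ▸ add_le_add e1 e2) hv
  rw [edist_dist, edist_dist, ← ENNReal.ofReal_add dist_nonneg dist_nonneg,
    ENNReal.ofReal_lt_ofReal_iff (by positivity)] at e3
  simp only at hts
  linarith

/-- Exponential growth beats linear growth. -/
theorem exists_pow_ge_linear (A B R : ℝ) (hA : 0 ≤ A) (hR : 0 < R) :
    ∃ N : ℕ, A + N * B ≤ 2 ^ N * (R / 2) := by
  obtain ⟨k, hk⟩ := exists_nat_ge ((A + B) / (R / 2))
  have hsq : ∀ n : ℕ, (n + 4) ^ 2 ≤ 2 ^ (n + 4) := by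
    intro n
    induction n with
    | zero => norm_num
    | succ n ih =>
      rw [show n + 1 + 4 = (n + 4) + 1 by ring, pow_succ 2]
      have h : (n + 4) ^ 2 * 2 = (n + 4 + 1) ^ 2 + (n ^ 2 + 6 * n + 7) := by ring
      omega
  refine ⟨k + 4, ?_⟩
  have h2 : (((k + 4 : ℕ) : ℝ)) ^ 2 ≤ 2 ^ (k + 4) := by exact_mod_cast hsq k
  rw [div_le_iff₀ (by positivity)] at hk
  have hk0 : (0 : ℝ) ≤ k := Nat.cast_nonneg k
  push_cast at *
  have h3 : A + (k + 4) * B ≤ ((k : ℝ) + 4) * (A + B) := by nlinarith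
  have h4 : A + B ≤ ((k : ℝ) + 4) * (R / 2) := by nlinarith
  have h5 : ((k : ℝ) + 4) * (A + B) ≤ ((k : ℝ) + 4) ^ 2 * (R / 2) := by
    rw [pow_two, mul_assoc]; exact mul_le_mul_of_nonneg_left h4 (by linarith)
  have h6 := mul_le_mul_of_nonneg_right h2 (show 0 ≤ R / 2 by positivity)
  linarith

/-- Logarithmic bound on the excess of points of `L x y`. -/
theorem excess_log {Ω : Type*} [MetricSpace Ω]
    (R : ℝ) (Υ : Set Ω)
    (hbtw : ∀ x y : Ω, ∀ s, 0 ≤ s → s ≤ dist x y →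
      ∃ a ∈ Υ, dist x a ≤ s + 5 / 4 * R ∧ dist a y ≤ dist x y - s + 5 / 4 * R)
    (δ : ℝ)
    (L : Ω → Ω → Set Ω)
    (hmem : ∀ x ∈ Υ, ∀ y ∈ Υ, x ∈ L x y ∧ y ∈ L x y)
    (hslim : ∀ x ∈ Υ, ∀ y ∈ Υ, ∀ z ∈ Υ, ∀ p ∈ L x y,
      ∃ q ∈ L x z ∪ L z y, dist p q ≤ δ)
    (hdiam : ∀ x ∈ Υ, ∀ y ∈ Υ, dist x y ≤ 3 * R →
      ∀ p ∈ L x y, ∀ q ∈ L x y, dist p q ≤ δ) (n : ℕ) :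
    ∀ x ∈ Υ, ∀ y ∈ Υ, dist x y ≤ 5 / 2 * R + 2 ^ n * (R / 2) → ∀ p ∈ L x y,
      dist x p + dist p y - dist x y ≤ 2 * δ + n * (2 * δ + 5 / 2 * R) := by
  induction n with
  | zero =>
    intro x hx y hy hd p hp
    have h3 : dist x y ≤ 3 * R := by rw [pow_zero] at hd; linarith
    have h1 := hdiam x hx y hy h3 x (hmem x hx y hy).1 p hp
    have h2 := hdiam x hx y hy h3 p hp y (hmem x hx y hy).2
    have := dist_nonneg (x := x) (y := y)
    push_cast
    linarith
  | succ n ih =>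
    intro x hx y hy hd p hp
    have hD := dist_nonneg (x := x) (y := y)
    obtain ⟨m, hm, h1, h2⟩ := hbtw x y (dist x y / 2) (by linarith) (by linarith)
    obtain ⟨q, hq, hpq⟩ := hslim x hx y hy m hm p hp
    rw [pow_succ] at hd
    push_cast
    have t1 := dist_triangle x q p
    have t2 := dist_triangle p q y
    rw [dist_comm q p] at t1
    rcases hq with hq | hq
    · have := ih x hx m hm (by linarith) q hq
      have t3 := dist_triangle q m y
      linarith
    · have := ih m hm y hy (by linarith) q hq
      have t3 := dist_triangle x m q
      linarith

/-- Uniform bound on the excess of points of `L x y`. -/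
theorem excess_bounded {Ω : Type*} [MetricSpace Ω]
    (R : ℝ) (hR : 0 < R) (Υ : Set Ω)
    (hbtw : ∀ x y : Ω, ∀ s, 0 ≤ s → s ≤ dist x y →
      ∃ a ∈ Υ, dist x a ≤ s + 5 / 4 * R ∧ dist a y ≤ dist x y - s + 5 / 4 * R)
    (δ : ℝ) (hδ : 0 ≤ δ)
    (L : Ω → Ω → Set Ω)
    (hmem : ∀ x ∈ Υ, ∀ y ∈ Υ, x ∈ L x y ∧ y ∈ L x y)
    (hslim : ∀ x ∈ Υ, ∀ y ∈ Υ, ∀ z ∈ Υ, ∀ p ∈ L x y,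
      ∃ q ∈ L x z ∪ L z y, dist p q ≤ δ)
    (hdiam : ∀ x ∈ Υ, ∀ y ∈ Υ, dist x y ≤ 3 * R →
      ∀ p ∈ L x y, ∀ q ∈ L x y, dist p q ≤ δ) :
    ∃ K : ℝ, 0 ≤ K ∧ ∀ x ∈ Υ, ∀ y ∈ Υ, ∀ p ∈ L x y,
      dist x p + dist p y - dist x y ≤ K := by
  obtain ⟨N, hN⟩ := exists_pow_ge_linear (10 * δ + 11 * R) (2 * δ + 5 / 2 * R) R
    (by positivity) hR
  have hlog := excess_log R Υ hbtw δ L hmem hslim hdiam N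
  obtain ⟨F, hF⟩ : ∃ F : ℝ, F = N * (2 * δ + 5 / 2 * R) := ⟨_, rfl⟩
  have hF0 : 0 ≤ F := by rw [hF]; positivity
  rw [← hF] at hN hlog
  obtain ⟨K, hK⟩ : ∃ K : ℝ, K = 6 * δ + 5 * R + F := ⟨_, rfl⟩
  obtain ⟨M, hM⟩ : ∃ M : ℝ, M = K / 2 + 2 * δ + 3 * R := ⟨_, rfl⟩
  refine ⟨K, by rw [hK]; positivity, ?_⟩
  have hself : ∀ x ∈ Υ, ∀ p ∈ L x x, dist x p ≤ δ := fun x hx p hp =>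
    hdiam x hx x hx (by rw [dist_self]; positivity) x (hmem x hx x hx).1 p hp
  have key : ∀ n : ℕ, ∀ x ∈ Υ, ∀ y ∈ Υ, dist x y ≤ n * R → ∀ p ∈ L x y,
      dist x p + dist p y - dist x y ≤ K := by
    intro n
    induction n with
    | zero =>
      intro x hx y hy hd p hp
      have h3 : dist x y ≤ 3 * R := by push_cast at hd; linarith
      have h1 := hdiam x hx y hy h3 x (hmem x hx y hy).1 p hp
      have h2 := hdiam x hx y hy h3 p hp y (hmem x hx y hy).2
      have := dist_nonneg (x := x) (y := y)
      linarith
    | succ n ih =>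
      intro x hx y hy hd p hp
      push_cast at hd
      obtain ⟨t, ht⟩ : ∃ t : ℝ, t = (dist x p + dist x y - dist p y) / 2 := ⟨_, rfl⟩
      have T1 := dist_triangle x p y
      have T2 := dist_triangle x y p
      have T3 := dist_triangle p x y
      rw [dist_comm y p] at T2
      rw [dist_comm p x] at T3
      by_contra hcon
      push Not at hcon
      -- the point b
      obtain ⟨b, hb, b1, b2, b3, b4⟩ : ∃ b ∈ Υ, dist x b + dist b y ≤ dist x y + 5 / 2 * R ∧
          dist x b ≤ t + M + 5 / 4 * R ∧ t - M ≤ dist x b ∧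
          ∀ q ∈ L b y, 2 * δ < dist p q := by
        by_cases hc : t + M ≤ dist x y
        · obtain ⟨b, hb, h1, h2⟩ := hbtw x y (t + M) (by linarith) hc
          refine ⟨b, hb, by linarith, by linarith, ?_, ?_⟩
          · have := dist_triangle x b y
            linarith
          · intro q hq
            by_contra! hpq
            have h3 := ih b hb y hy (by linarith) q hq
            have h4 := dist_triangle p q y
            have h5 := dist_triangle p b y
            have h6 := dist_triangle p q b
            rw [dist_comm q b] at h6
            linarith
        · refine ⟨y, hy, by rw [dist_self]; linarith, by linarith, by linarith, ?_⟩
          intro q hq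
          by_contra! hpq
          have h3 := hself y hy q hq
          have h4 := dist_triangle p q y
          rw [dist_comm q y] at h4
          linarith
      obtain ⟨a, ha, a1, a2, a3⟩ : ∃ a ∈ Υ, dist x a + dist a b ≤ dist x b + 5 / 2 * R ∧
          dist a b ≤ 2 * M + 5 / 2 * R ∧ ∀ q ∈ L x a, 2 * δ < dist p q := by
        by_cases hc : 0 ≤ t - M
        · obtain ⟨a, ha, h1, h2⟩ := hbtw x b (t - M) hc b3
          refine ⟨a, ha, by linarith, by linarith, ?_⟩
          intro q hq
          by_contra! hpq
          have h3 := ih x hx a ha (by linarith) q hq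
          have h4 := dist_triangle x q p
          have h5 := dist_triangle x a p
          have h6 := dist_triangle a q p
          rw [dist_comm q p] at h4 h6
          rw [dist_comm a q] at h6
          linarith
        · refine ⟨x, hx, by rw [dist_self]; linarith, by linarith, ?_⟩
          intro q hq
          by_contra! hpq
          have h3 := hself x hx q hq
          have h4 := dist_triangle x q p
          rw [dist_comm q p] at h4
          linarith
      obtain ⟨q, hq, hpq⟩ := hslim x hx y hy b hb p hp
      rcases hq with hq | hq
      · obtain ⟨r, hr, hqr⟩ := hslim x hx b hb a ha q hq
        have hpr : dist p r ≤ 2 * δ := by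
          have := dist_triangle p q r
          linarith
        rcases hr with hr | hr
        · have := a3 r hr
          linarith
        · have h1 := hlog a ha b hb (by linarith) r hr
          have h2 := dist_triangle x a p
          have h3 := dist_triangle a r p
          have h4 := dist_triangle p r y
          have h5 := dist_triangle r b y
          rw [dist_comm r p] at h3
          linarith
      · have := b4 q hq
        linarith
  intro x hx y hy p hp
  obtain ⟨n, hn⟩ := exists_nat_ge (dist x y / R)
  exact key n x hx y hy ((div_le_iff₀ hR).1 hn) p hp

/-- **Guessing geodesics.** If `Ω` is a path metric space, `Υ ⊆ Ω` is `R`-dense, and for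
all pairs `x,y ∈ Υ` there are rectifiably path-connected sets `L(x,y) ∋ x,y` forming
`δ`-slim triangles and having diameter at most `δ` whenever `d(x,y) ≤ 3R`, then `Ω`
is Gromov hyperbolic. -/
theorem guessing_geodesics {Ω : Type*} [MetricSpace Ω]
    (hpath : IsPathMetricSpace Ω)
    (R : ℝ) (hR : 0 < R)
    (Υ : Set Ω) (hdense : ∀ x : Ω, ∃ y ∈ Υ, dist x y ≤ R)
    (δ : ℝ) (hδ : 0 ≤ δ)
    (L : Ω → Ω → Set Ω)
    (hmem : ∀ x ∈ Υ, ∀ y ∈ Υ, x ∈ L x y ∧ y ∈ L x y)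
    (hrect : ∀ x ∈ Υ, ∀ y ∈ Υ, ∀ a ∈ L x y, ∀ b ∈ L x y,
      ∃ γ : ℝ → Ω, ContinuousOn γ (Set.Icc 0 1) ∧ γ 0 = a ∧ γ 1 = b ∧
        (∀ t ∈ Set.Icc (0 : ℝ) 1, γ t ∈ L x y) ∧
        eVariationOn γ (Set.Icc 0 1) ≠ ⊤)
    (hslim : ∀ x ∈ Υ, ∀ y ∈ Υ, ∀ z ∈ Υ, ∀ p ∈ L x y,
      ∃ q ∈ L x z ∪ L z y, dist p q ≤ δ)
    (hdiam : ∀ x ∈ Υ, ∀ y ∈ Υ, dist x y ≤ 3 * R →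
      ∀ p ∈ L x y, ∀ q ∈ L x y, dist p q ≤ δ) :
    ∃ δ' : ℝ, 0 ≤ δ' ∧
      ∀ x y z w : Ω,
        min (gromovProd x y w) (gromovProd y z w) - δ' ≤ gromovProd x z w := by
  have hbtw : ∀ x y : Ω, ∀ s, 0 ≤ s → s ≤ dist x y →
      ∃ a ∈ Υ, dist x a ≤ s + 5 / 4 * R ∧ dist a y ≤ dist x y - s + 5 / 4 * R := by
    intro x y s h0 hs
    obtain ⟨m, h1, h2⟩ := exists_between_of_path hpath (R / 4) (by positivity) x y s h0 hs
    obtain ⟨a, ha, h3⟩ := hdense m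
    have h4 := dist_triangle x m a
    have h5 := dist_triangle a m y
    rw [dist_comm a m] at h5
    exact ⟨a, ha, by linarith, by linarith⟩
  obtain ⟨K, hK0, hK⟩ := excess_bounded R hR Υ hbtw δ hδ L hmem hslim hdiam
  -- points of L realizing the Gromov product
  have hprod : ∀ x ∈ Υ, ∀ y ∈ Υ, ∀ w ∈ Υ, ∃ p ∈ L x y,
      dist p w ≤ gromovProd x y w + K + 2 * (δ + 1) := by
    intro x hx y hy w hw
    obtain ⟨γ, hc, h0, h1, hL, -⟩ :=
      hrect x hx y hy x (hmem x hx y hy).1 y (hmem x hx y hy).2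
    have hne1 : (L x w).Nonempty := ⟨x, (hmem x hx w hw).1⟩
    have hne2 : (L w y).Nonempty := ⟨y, (hmem w hw y hy).2⟩
    have hcl : ∀ S : Set Ω, ∃ C : Set ℝ, IsClosed C ∧
        {t | Metric.infDist (γ t) S ≤ δ} ∩ Set.Icc (0 : ℝ) 1 = C ∩ Set.Icc (0 : ℝ) 1 := by
      intro S
      have hcS : ContinuousOn (fun t => Metric.infDist (γ t) S) (Set.Icc (0 : ℝ) 1) :=
        (Metric.continuous_infDist_pt S).comp_continuousOn hc
      obtain ⟨C, hC, h⟩ := (continuousOn_iff_isClosed.1 hcS) (Set.Iic δ) isClosed_Iic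
      exact ⟨C, hC, h⟩
    obtain ⟨C1, hC1, e1⟩ := hcl (L x w)
    obtain ⟨C2, hC2, e2⟩ := hcl (L w y)
    have hpre := isPreconnected_closed_iff.1 (isPreconnected_Icc (a := (0 : ℝ)) (b := 1))
      C1 C2 hC1 hC2
    have m1 : ∀ t ∈ Set.Icc (0 : ℝ) 1, Metric.infDist (γ t) (L x w) ≤ δ ↔ t ∈ C1 := by
      intro t ht
      have := Set.ext_iff.1 e1 t
      simpa [ht.1, ht.2] using this
    have m2 : ∀ t ∈ Set.Icc (0 : ℝ) 1, Metric.infDist (γ t) (L w y) ≤ δ ↔ t ∈ C2 := by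
      intro t ht
      have := Set.ext_iff.1 e2 t
      simpa [ht.1, ht.2] using this
    obtain ⟨t, ht, ht1, ht2⟩ := hpre
      (by
        intro t ht
        obtain ⟨q, hq, hd⟩ := hslim x hx y hy w hw (γ t) (hL t ht)
        rcases hq with hq | hq
        · exact Or.inl ((m1 t ht).1 ((Metric.infDist_le_dist_of_mem hq).trans hd))
        · exact Or.inr ((m2 t ht).1 ((Metric.infDist_le_dist_of_mem hq).trans hd)))
      ⟨0, by simp, (m1 0 (by simp)).1 (by
        rw [h0, Metric.infDist_zero_of_mem (hmem x hx w hw).1]; exact hδ)⟩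
      ⟨1, by simp, (m2 1 (by simp)).1 (by
        rw [h1, Metric.infDist_zero_of_mem (hmem w hw y hy).2]; exact hδ)⟩
    obtain ⟨q1, hq1, d1⟩ := (Metric.infDist_lt_iff hne1).1
      (lt_of_le_of_lt ((m1 t ht).2 ht1) (lt_add_one δ))
    obtain ⟨q2, hq2, d2⟩ := (Metric.infDist_lt_iff hne2).1
      (lt_of_le_of_lt ((m2 t ht).2 ht2) (lt_add_one δ))
    refine ⟨γ t, hL t ht, ?_⟩
    have k1 := hK x hx w hw q1 hq1
    have k2 := hK w hw y hy q2 hq2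
    generalize γ t = p at *
    have t1 := dist_triangle x q1 p
    have t2 := dist_triangle p q1 w
    have t3 := dist_triangle w q2 p
    have t4 := dist_triangle p q2 y
    have t5 := dist_triangle x p y
    rw [dist_comm q1 p] at t1
    rw [dist_comm q2 p, dist_comm w p] at t3
    unfold gromovProd
    rw [dist_comm y w]
    linarith
  have hprod2 : ∀ x ∈ Υ, ∀ y ∈ Υ, ∀ w, ∀ q ∈ L x y,
      gromovProd x y w ≤ dist q w + K / 2 := by
    intro x hx y hy w q hq
    have k := hK x hx y hy q hq
    have t1 := dist_triangle x q w
    have t2 := dist_triangle y q w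
    rw [dist_comm y q] at t2
    unfold gromovProd
    linarith
  have happ : ∀ x y w x' y' w' : Ω, dist x x' ≤ R → dist y y' ≤ R → dist w w' ≤ R →
      gromovProd x y w ≤ gromovProd x' y' w' + 3 * R := by
    intro x y w x' y' w' h1 h2 h3
    have t1 := dist_triangle4 x x' w' w
    have t2 := dist_triangle4 y y' w' w
    have t3 := dist_triangle4 x' x y y'
    rw [dist_comm w' w] at t1 t2
    rw [dist_comm x' x] at t3
    unfold gromovProd
    linarith
  refine ⟨3 / 2 * K + 3 * δ + 2 + 6 * R, by positivity, ?_⟩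
  intro x y z w
  obtain ⟨x', hx, dx⟩ := hdense x
  obtain ⟨y', hy, dy⟩ := hdense y
  obtain ⟨z', hz, dz⟩ := hdense z
  obtain ⟨w', hw, dw⟩ := hdense w
  obtain ⟨p, hp, hpw⟩ := hprod x' hx z' hz w' hw
  obtain ⟨q, hq, hpq⟩ := hslim x' hx z' hz y' hy p hp
  have A3 := happ x' z' w' x z w (by rwa [dist_comm]) (by rwa [dist_comm]) (by rwa [dist_comm])
  have t1 := dist_triangle q p w'
  rw [dist_comm q p] at t1
  rcases hq with hq | hq
  · have A1 := happ x y w x' y' w' dx dy dw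
    have := hprod2 x' hx y' hy w' q hq
    have := min_le_left (gromovProd x y w) (gromovProd y z w)
    linarith
  · have A1 := happ y z w y' z' w' dy dz dw
    have := hprod2 y' hy z' hz w' q hq
    have := min_le_right (gromovProd x y w) (gromovProd y z w)
    linarith
end

section
/- For every B > 0 there exist constants K ≥ 1 and C ≥ 0, depending only on B, with the following property. Let X be a connected simple graph such that for each pair of vertices w,w' there exists an edge path γ(w,w') from w to w' so that, for every vertex v on γ(w,w'), every walk in X from w to w' contains a vertex at graph distance at most B from v. Then X is (K,C)-quasi-isometric to a simplicial tree: there exist a connected acyclic simple graph T and a map f from the vertices of X to the vertices of T such that (1/K)·d_X(x,y) − C ≤ d_T(f(x),f(y)) ≤ K·d_X(x,y) + C for all vertices x,y of X, and every vertex of T is within graph distance C of the image of f. -/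
universe u

namespace BQT

variable {V : Type u} {X : SimpleGraph V}

lemma near_split (hX : X.Connected) (x y : V) (k : ℕ) {u : V} (p : X.Walk u y)
    (hu : X.dist u x ≤ k) (h : ∀ v ∈ p.support, X.dist v x ≤ k ∨ X.dist v y ≤ k) :
    X.dist x y ≤ 2 * k + 1 := by
  induction p with
  | nil => rw [SimpleGraph.dist_comm]; omega
  | @cons a b c hab q ih =>
    rcases h b (by simp) with h1 | h1
    · exact ih h1 (fun v hv => h v (by simp [hv]))
    · have e1 := hX.dist_triangle (u := x) (v := a) (w := c)
      have e2 := hX.dist_triangle (u := a) (v := b) (w := c)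
      have e3 : X.dist a b = 1 := SimpleGraph.dist_eq_one_iff_adj.mpr hab
      rw [SimpleGraph.dist_comm] at hu
      omega

lemma geod_split (o x z : V) (p : X.Walk o x) (hp : p.length = X.dist o x)
    (hz : z ∈ p.support) : X.dist o z + X.dist z x ≤ X.dist o x := by
  classical
  have h1 := SimpleGraph.dist_le (p.takeUntil z hz)
  have h2 := SimpleGraph.dist_le (p.dropUntil z hz)
  have h3 := congrArg SimpleGraph.Walk.length (p.take_spec hz)
  rw [SimpleGraph.Walk.length_append] at h3
  omega

/-- Two vertices on the same sphere about `o`, joined by a walk outside the open ball. -/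
def Rel (X : SimpleGraph V) (o x y : V) : Prop :=
  X.dist o x = X.dist o y ∧ ∃ p : X.Walk x y, ∀ v ∈ p.support, X.dist o x ≤ X.dist o v

lemma rel_diam (hX : X.Connected) (b : ℕ)
    (hb : ∀ w w' : V, ∃ γ : X.Walk w w', ∀ v ∈ γ.support,
          ∀ p : X.Walk w w', ∃ z ∈ p.support, X.dist v z ≤ b)
    (o x y : V) (h : Rel X o x y) : X.dist x y ≤ 6 * b + 1 := by
  obtain ⟨hxy, p, hp⟩ := h
  obtain ⟨γ, hγ⟩ := hb x y
  have := near_split hX x y (3 * b) γ (by simp) ?_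
  · omega
  intro v hv
  obtain ⟨z, hz, hvz⟩ := hγ v hv p
  have hz' := hp z hz
  obtain ⟨q, hq⟩ := hX.exists_walk_length_eq_dist o x
  obtain ⟨r, hr⟩ := hX.exists_walk_length_eq_dist o y
  obtain ⟨t, ht, hvt⟩ := hγ v hv (q.reverse.append r)
  have t1 := hX.dist_triangle (u := o) (v := v) (w := z)
  have t2 := hX.dist_triangle (u := o) (v := t) (w := v)
  rw [SimpleGraph.dist_comm (u := t)] at t2
  rw [SimpleGraph.Walk.mem_support_append_iff] at ht
  rcases ht with ht | ht
  · left
    have := geod_split o x t q hq (by simpa using ht)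
    have t3 := hX.dist_triangle (u := v) (v := t) (w := x)
    omega
  · right
    have := geod_split o y t r hr ht
    have t3 := hX.dist_triangle (u := v) (v := t) (w := y)
    omega

/-- The layering equivalence relation. -/
def layer (X : SimpleGraph V) (o : V) : Setoid V where
  r := Rel X o
  iseqv := by
    refine ⟨fun x => ⟨rfl, .nil, by simp⟩, ?_, ?_⟩
    · rintro x y ⟨h, p, hp⟩
      exact ⟨h.symm, p.reverse, fun v hv => h ▸ hp v (by simpa using hv)⟩
    · rintro x y z ⟨h, p, hp⟩ ⟨h', q, hq⟩
      refine ⟨h.trans h', p.append q, fun v hv => ?_⟩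
      rw [SimpleGraph.Walk.mem_support_append_iff] at hv
      rcases hv with hv | hv
      · exact hp v hv
      · exact h ▸ hq v hv

/-- The layering tree. -/
def tree (X : SimpleGraph V) (o : V) : SimpleGraph (Quotient (layer X o)) where
  Adj s t := s ≠ t ∧ ∃ a b, X.Adj a b ∧ Quotient.mk (layer X o) a = s ∧
    Quotient.mk (layer X o) b = t
  symm := ⟨fun s t ⟨h, a, b, hab, ha, hb⟩ => ⟨h.symm, b, a, hab.symm, hb, ha⟩⟩
  loopless := ⟨fun s h => h.1 rfl⟩

/-- The level of a class. -/
noncomputable def level (X : SimpleGraph V) (o : V) : Quotient (layer X o) → ℕ :=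
  Quotient.lift (fun x => X.dist o x) (fun _ _ h => h.1)

lemma adj_eq (o a b : V) (hab : X.Adj a b) (h : X.dist o a = X.dist o b) :
    Quotient.mk (layer X o) a = Quotient.mk (layer X o) b :=
  Quotient.sound (s := layer X o) ⟨h, hab.toWalk, by
    intro v hv
    simp at hv
    rcases hv with rfl | rfl <;> omega⟩

lemma adj_dist (hX : X.Connected) (o a b : V) (hab : X.Adj a b) :
    X.dist o b ≤ X.dist o a + 1 := by
  have e2 := hX.dist_triangle (u := o) (v := a) (w := b)
  rwa [SimpleGraph.dist_eq_one_iff_adj.mpr hab] at e2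

/-- A neighbour of no larger level is represented by a lower adjacent vertex. -/
lemma adj_lower (hX : X.Connected) (o : V) {s t : Quotient (layer X o)}
    (h : (tree X o).Adj s t) (hl : level X o t ≤ level X o s) :
    ∃ a b, X.Adj a b ∧ Quotient.mk (layer X o) a = s ∧
      Quotient.mk (layer X o) b = t ∧ X.dist o a = X.dist o b + 1 := by
  obtain ⟨hne, a, b, hab, rfl, rfl⟩ := h
  refine ⟨a, b, hab, rfl, rfl, ?_⟩
  have h1 := adj_dist hX o b a hab.symm
  have h2 : X.dist o b ≤ X.dist o a := hl
  have h3 : X.dist o a ≠ X.dist o b := fun h => hne (adj_eq o a b hab h)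
  omega

lemma lower_unique (hX : X.Connected) (o : V) {s t t' : Quotient (layer X o)}
    (h : (tree X o).Adj s t) (hl : level X o t ≤ level X o s)
    (h' : (tree X o).Adj s t') (hl' : level X o t' ≤ level X o s) : t = t' := by
  obtain ⟨a, b, hab, rfl, rfl, hd⟩ := adj_lower hX o h hl
  obtain ⟨a', b', hab', ha, rfl, hd'⟩ := adj_lower hX o h' hl'
  obtain ⟨he, p, hp⟩ : Rel X o a' a := Quotient.exact ha
  refine Quotient.sound (s := layer X o) ⟨by omega,
    .cons hab.symm (p.reverse.append hab'.toWalk), ?_⟩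
  intro v hv
  rw [SimpleGraph.Walk.support_cons, List.mem_cons,
    SimpleGraph.Walk.mem_support_append_iff] at hv
  rcases hv with rfl | hv | hv
  · exact le_rfl
  · have := hp v (by simpa using hv)
    omega
  · simp at hv
    rcases hv with rfl | rfl <;> omega

lemma tree_acyclic (hX : X.Connected) (o : V) : (tree X o).IsAcyclic := by
  classical
  intro u c hc
  obtain ⟨m, hm, hmax⟩ := c.support.toFinset.exists_max_image (level X o) ⟨u, by simp⟩
  simp only [List.mem_toFinset] at hm hmax
  have hc' := hc.rotate hm
  have hnn := hc'.not_nil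
  have hs : ∀ v ∈ (c.rotate m hm).support, level X o v ≤ level X o m := by
    intro v hv
    exact hmax v (by simpa using hv)
  exact hc'.snd_ne_penultimate (lower_unique hX o
    ((c.rotate m hm).adj_snd hnn) (hs _ (SimpleGraph.Walk.getVert_mem_support _ _))
    ((c.rotate m hm).adj_penultimate hnn).symm
    (hs _ (SimpleGraph.Walk.getVert_mem_support _ _)))

lemma walk_push (o : V) {x y : V} (p : X.Walk x y) :
    ∃ q : (tree X o).Walk (Quotient.mk (layer X o) x) (Quotient.mk (layer X o) y),
      q.length ≤ p.length := by
  induction p with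
  | nil => exact ⟨.nil, le_rfl⟩
  | @cons a b c hab p ih =>
    obtain ⟨q, hq⟩ := ih
    by_cases h : Quotient.mk (layer X o) a = Quotient.mk (layer X o) b
    · rw [h]
      exact ⟨q, by simp; omega⟩
    · have hadj : (tree X o).Adj (Quotient.mk (layer X o) a) (Quotient.mk (layer X o) b) :=
        ⟨h, a, b, hab, rfl, rfl⟩
      exact ⟨.cons hadj q, by simpa using hq⟩

lemma walk_lift (hX : X.Connected) (o : V) (D : ℕ)
    (hD : ∀ x y, Rel X o x y → X.dist x y ≤ D) {s t : Quotient (layer X o)}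
    (p : (tree X o).Walk s t) : ∀ x y, Quotient.mk (layer X o) x = s →
      Quotient.mk (layer X o) y = t → X.dist x y ≤ (D + 1) * p.length + D := by
  induction p with
  | nil =>
    rintro x y rfl h
    simpa using hD x y (Quotient.exact h.symm)
  | cons h p ih =>
    rintro x y rfl hy
    obtain ⟨a, b, hab, ha, hb⟩ := And.right h
    have h1 := ih b y hb hy
    have h2 := hD x a (Quotient.exact ha.symm)
    have e1 := hX.dist_triangle (u := x) (v := a) (w := y)
    have e2 := hX.dist_triangle (u := a) (v := b) (w := y)
    rw [SimpleGraph.dist_eq_one_iff_adj.mpr hab] at e2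
    rw [SimpleGraph.Walk.length_cons, mul_add]
    omega

lemma tree_connected (hX : X.Connected) (o : V) : (tree X o).Connected := by
  haveI : Nonempty (Quotient (layer X o)) := ⟨Quotient.mk _ o⟩
  refine ⟨fun s t => ?_⟩
  induction s using Quotient.inductionOn with | _ x => ?_
  induction t using Quotient.inductionOn with | _ y => ?_
  obtain ⟨p⟩ := hX.preconnected x y
  obtain ⟨q, -⟩ := walk_push o p
  exact ⟨q⟩

end BQT

/-- **Bottleneck criterion (Manning).** For every `B > 0` there are constants `K ≥ 1`
and `C ≥ 0`, depending only on `B`, such that any connected graph `X` in which every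
pair of vertices `w, w'` is joined by a walk `γ(w,w')` with the property that every
walk from `w` to `w'` passes within graph distance `B` of each vertex of `γ(w,w')`,
is `(K,C)`-quasi-isometric to a simplicial tree (a connected acyclic simple graph). -/
theorem bottleneck_quasi_tree (B : ℝ) (hB : 0 < B) :
    ∃ K C : ℝ, 1 ≤ K ∧ 0 ≤ C ∧
      ∀ (V : Type u) (X : SimpleGraph V), X.Connected →
        (∀ w w' : V, ∃ γ : X.Walk w w', ∀ v ∈ γ.support,
          ∀ p : X.Walk w w', ∃ z ∈ p.support, (X.dist v z : ℝ) ≤ B) →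
        ∃ (V' : Type u) (T : SimpleGraph V') (f : V → V'),
          T.Connected ∧ T.IsAcyclic ∧
          (∀ x y : V,
            (1 / K) * (X.dist x y : ℝ) - C ≤ (T.dist (f x) (f y) : ℝ) ∧
            (T.dist (f x) (f y) : ℝ) ≤ K * (X.dist x y : ℝ) + C) ∧
          (∀ t : V', ∃ x : V, (T.dist t (f x) : ℝ) ≤ C) := by
  set D : ℕ := 6 * ⌊B⌋₊ + 1 with hDdef
  have hD1 : (1 : ℝ) ≤ (D : ℝ) + 1 := by
    have : (0 : ℝ) ≤ D := Nat.cast_nonneg D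
    linarith
  refine ⟨(D : ℝ) + 1, D, hD1, Nat.cast_nonneg D, ?_⟩
  intro V X hX hbot
  obtain ⟨o⟩ := hX.nonempty
  have hb : ∀ w w' : V, ∃ γ : X.Walk w w', ∀ v ∈ γ.support,
      ∀ p : X.Walk w w', ∃ z ∈ p.support, X.dist v z ≤ ⌊B⌋₊ := by
    intro w w'
    obtain ⟨γ, hγ⟩ := hbot w w'
    refine ⟨γ, fun v hv p => ?_⟩
    obtain ⟨z, hz, h⟩ := hγ v hv p
    exact ⟨z, hz, Nat.le_floor h⟩
  have hD := BQT.rel_diam hX _ hb o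
  refine ⟨Quotient (BQT.layer X o), BQT.tree X o, Quotient.mk (BQT.layer X o),
    BQT.tree_connected hX o, BQT.tree_acyclic hX o, fun x y => ⟨?_, ?_⟩, fun t => ?_⟩
  · obtain ⟨p, hp⟩ := (BQT.tree_connected hX o).exists_walk_length_eq_dist
      (Quotient.mk (BQT.layer X o) x) (Quotient.mk (BQT.layer X o) y)
    have h := BQT.walk_lift hX o D hD p x y rfl rfl
    rw [hp] at h
    have h' : (X.dist x y : ℝ) ≤ ((D : ℝ) + 1) * ((BQT.tree X o).dist
      (Quotient.mk (BQT.layer X o) x) (Quotient.mk (BQT.layer X o) y) : ℝ) + D := by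
      exact_mod_cast h
    have hpos : (0 : ℝ) < (D : ℝ) + 1 := by linarith
    rw [sub_le_iff_le_add, one_div, inv_mul_le_iff₀ hpos]
    nlinarith [Nat.cast_nonneg (α := ℝ) D]
  · obtain ⟨p, hp⟩ := hX.exists_walk_length_eq_dist x y
    obtain ⟨q, hq⟩ := BQT.walk_push o p
    have h := (SimpleGraph.dist_le q).trans hq
    rw [hp] at h
    have h' : ((BQT.tree X o).dist (Quotient.mk (BQT.layer X o) x)
      (Quotient.mk (BQT.layer X o) y) : ℝ) ≤ (X.dist x y : ℝ) := by exact_mod_cast h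
    nlinarith [Nat.cast_nonneg (α := ℝ) D, Nat.cast_nonneg (α := ℝ) (X.dist x y)]
  · induction t using Quotient.inductionOn with | _ x => ?_
    exact ⟨x, by simp⟩
end

section
/- Let X be a connected simple graph with graph metric d, let B be a positive integer, let w,w' be vertices of X, and let w = w₀, w₁, …, w_n = w' be a walk in X such that every walk from w to w' contains, for each 0 ≤ i ≤ n, some vertex at distance at most B from w_i. Let α be a geodesic (shortest edge path) from w to w' and let m be a vertex on α satisfying |d(w,m) − d(m,w')| ≤ 1. Then there exists an index i with d(m, w_i) ≤ 2B + 1. -/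
theorem dist_getVert_le_sub {V : Type*} (X : SimpleGraph V) (hconn : X.Connected)
    {u v : V} (q : X.Walk u v) (a c : ℕ) :
    X.dist (q.getVert a) (q.getVert (a + c)) ≤ c := by
  induction c with
  | zero => simp
  | succ c ih =>
    have h1 : X.dist (q.getVert (a + c)) (q.getVert (a + (c + 1))) ≤ 1 := by
      by_cases h : a + c < q.length
      · exact (SimpleGraph.dist_eq_one_iff_adj.2 (q.adj_getVert_succ h)).le
      · rw [q.getVert_of_length_le (by omega), q.getVert_of_length_le (by omega)]
        simp
    have := hconn.dist_triangle (u := q.getVert a) (v := q.getVert (a + c))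
      (w := q.getVert (a + (c + 1)))
    omega


/-- Midpoints of geodesics lie near bottleneck walks: if every walk from `w` to `w'`
passes within graph distance `B` of each vertex `w_i` of a fixed walk
`w = w₀, w₁, …, w_n = w'`, and `m` is a midpoint of a geodesic from `w` to `w'`
(i.e. `|d(w,m) − d(m,w')| ≤ 1`), then `m` is within distance `2B + 1` of some `w_i`. -/
theorem midpoint_near_bottleneck_path {V : Type*} (X : SimpleGraph V)
    (hconn : X.Connected) (B : ℕ) (hB : 0 < B) (w w' : V)
    (p : X.Walk w w')
    (hp : ∀ i ≤ p.length, ∀ q : X.Walk w w',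
      ∃ z ∈ q.support, X.dist (p.getVert i) z ≤ B)
    (α : X.Walk w w') (hgeo : α.length = X.dist w w')
    (m : V) (hm : m ∈ α.support)
    (hmid : |(X.dist w m : ℤ) - (X.dist m w' : ℤ)| ≤ 1) :
    ∃ i ≤ p.length, X.dist m (p.getVert i) ≤ 2 * B + 1 := by
  classical
  have key : ∀ a b, a ≤ b → X.dist (α.getVert a) (α.getVert b) ≤ b - a := by
    intro a b hab
    have := dist_getVert_le_sub X hconn α a (b - a)
    rwa [Nat.add_sub_cancel' hab] at this
  obtain ⟨k, rfl, hk⟩ := SimpleGraph.Walk.mem_support_iff_exists_getVert.1 hm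
  have core : ∀ x y a b, a ≤ k → k ≤ b → b ≤ α.length → X.dist x (α.getVert a) ≤ B →
      X.dist y (α.getVert b) ≤ B → X.dist x y ≤ 1 →
      X.dist (α.getVert k) x ≤ 2 * B + 1 ∨ X.dist (α.getVert k) y ≤ 2 * B + 1 := by
    intro x y a b hak hkb hb hx hy hxy
    have e1 := key 0 a (by omega)
    have e2 := key b α.length hb
    have e3 := key a k hak
    have e4 := key k b hkb
    rw [α.getVert_zero] at e1
    rw [α.getVert_length] at e2
    have t1 := hconn.dist_triangle (u := w) (v := α.getVert a) (w := w')
    have t2 := hconn.dist_triangle (u := α.getVert a) (v := α.getVert b) (w := w')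
    have t3 := hconn.dist_triangle (u := α.getVert a) (v := x) (w := α.getVert b)
    have t4 := hconn.dist_triangle (u := x) (v := y) (w := α.getVert b)
    have t5 := hconn.dist_triangle (u := α.getVert k) (v := α.getVert a) (w := x)
    have t6 := hconn.dist_triangle (u := α.getVert k) (v := α.getVert b) (w := y)
    rw [X.dist_comm (u := α.getVert k) (v := α.getVert a)] at t5
    rw [X.dist_comm (u := α.getVert a) (v := x)] at t3 t5
    rw [X.dist_comm (u := α.getVert b) (v := y)] at t6
    omega
  by_contra hcon
  push Not at hcon
  have P : ∀ i ≤ p.length, ∃ a ≤ k, X.dist (p.getVert i) (α.getVert a) ≤ B := by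
    intro i
    induction i with
    | zero => intro _; exact ⟨0, by omega, by simp⟩
    | succ i ih =>
      intro hi
      obtain ⟨a, ha, hda⟩ := ih (by omega)
      obtain ⟨z, hz, hdz⟩ := hp (i + 1) hi α
      obtain ⟨b, rfl, hb⟩ := SimpleGraph.Walk.mem_support_iff_exists_getVert.1 hz
      by_cases hbk : b ≤ k
      · exact ⟨b, hbk, hdz⟩
      · have h1 := hcon i (by omega)
        have h2 := hcon (i + 1) hi
        have := core _ _ a b ha (by omega) hb hda hdz (dist_getVert_le_sub X hconn p i 1)
        omega
  obtain ⟨a, ha, hda⟩ := P p.length le_rfl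
  have h1 := hcon p.length le_rfl
  have := core _ (p.getVert p.length) a α.length ha hk le_rfl hda (by simp) (by simp)
  omega
end

section
/- Let u, v ∈ ℝ² be linearly independent, and let A, B ∈ SL(2,ℝ) be matrices such that both ‖Au‖ = ‖Av‖ = ‖Au − Av‖ and ‖Bu‖ = ‖Bv‖ = ‖Bu − Bv‖ hold (Euclidean norm on ℝ²). Then B·A⁻¹ is a rotation, i.e. B·A⁻¹ is an orthogonal matrix of determinant 1: (BA⁻¹)ᵀ(BA⁻¹) = I. In other words, the matrix A making the triangle (0,u,v) equilateral is unique up to left multiplication by an element of SO(2). -/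
open Matrix

lemma gram_aux (u v : EuclideanSpace ℝ (Fin 2)) (A : Matrix (Fin 2) (Fin 2) ℝ) (hA : A.det = 1)
    (h₁ : ‖Matrix.toEuclideanLin A u‖ = ‖Matrix.toEuclideanLin A v‖)
    (h₂ : ‖Matrix.toEuclideanLin A v‖ =
      ‖Matrix.toEuclideanLin A u - Matrix.toEuclideanLin A v‖) :
    ∃ s : ℝ, 0 ≤ s ∧ 3 * s ^ 2 = (u 0 * v 1 - u 1 * v 0) ^ 2 ∧
      (!![u 0, v 0; u 1, v 1])ᵀ * (Aᵀ * A) * !![u 0, v 0; u 1, v 1] =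
        !![2 * s, s; s, 2 * s] := by
  have k₁ := congrArg (fun x => x ^ 2) h₁
  have k₂ := congrArg (fun x => x ^ 2) h₂
  simp only [EuclideanSpace.norm_sq_eq, Fin.sum_univ_two, Real.norm_eq_abs, sq_abs,
    PiLp.sub_apply, Matrix.toLpLin_apply, Matrix.mulVec, dotProduct] at k₁ k₂
  rw [Matrix.det_fin_two] at hA
  obtain ⟨p0, hp0⟩ : ∃ x, x = A 0 0 * u 0 + A 0 1 * u 1 := ⟨_, rfl⟩
  obtain ⟨p1, hp1⟩ : ∃ x, x = A 1 0 * u 0 + A 1 1 * u 1 := ⟨_, rfl⟩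
  obtain ⟨q0, hq0⟩ : ∃ x, x = A 0 0 * v 0 + A 0 1 * v 1 := ⟨_, rfl⟩
  obtain ⟨q1, hq1⟩ : ∃ x, x = A 1 0 * v 0 + A 1 1 * v 1 := ⟨_, rfl⟩
  rw [← hp0, ← hp1, ← hq0, ← hq1] at k₁ k₂
  have hd : u 0 * v 1 - u 1 * v 0 = p0 * q1 - p1 * q0 := by
    rw [hp0, hp1, hq0, hq1]
    linear_combination (-(u 0 * v 1 - u 1 * v 0)) * hA
  have e1 : 2 * (p0 * q0 + p1 * q1) = p0 ^ 2 + p1 ^ 2 := by linarith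
  have e2 : 2 * (p0 * q0 + p1 * q1) = q0 ^ 2 + q1 ^ 2 := by linarith
  refine ⟨p0 * q0 + p1 * q1, by nlinarith [sq_nonneg p0, sq_nonneg p1], ?_, ?_⟩
  · rw [hd]
    linear_combination (2 * (p0 * q0 + p1 * q1)) * e1 + (p0 ^ 2 + p1 ^ 2) * e2
  · ext i j
    fin_cases i <;> fin_cases j <;>
      simp [Matrix.mul_apply, Fin.sum_univ_two]
    · rw [e1, hp0, hp1]; ring
    · rw [hp0, hp1, hq0, hq1]; ring
    · rw [hp0, hp1, hq0, hq1]; ring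
    · rw [e2, hq0, hq1]; ring

/-- **Uniqueness of the balance point.** If `u, v ∈ ℝ²` are linearly independent and
`A, B ∈ SL(2,ℝ)` both make the triangle `(0, u, v)` equilateral (in the Euclidean
norm), then `B·A⁻¹` is a rotation: it is orthogonal of determinant `1`. -/
theorem balance_point_unique (u v : EuclideanSpace ℝ (Fin 2))
    (h : LinearIndependent ℝ ![u, v])
    (A B : Matrix (Fin 2) (Fin 2) ℝ) (hA : A.det = 1) (hB : B.det = 1)
    (hAeq₁ : ‖Matrix.toEuclideanLin A u‖ = ‖Matrix.toEuclideanLin A v‖)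
    (hAeq₂ : ‖Matrix.toEuclideanLin A v‖ =
      ‖Matrix.toEuclideanLin A u - Matrix.toEuclideanLin A v‖)
    (hBeq₁ : ‖Matrix.toEuclideanLin B u‖ = ‖Matrix.toEuclideanLin B v‖)
    (hBeq₂ : ‖Matrix.toEuclideanLin B v‖ =
      ‖Matrix.toEuclideanLin B u - Matrix.toEuclideanLin B v‖) :
    (B * A⁻¹)ᵀ * (B * A⁻¹) = 1 ∧ (B * A⁻¹).det = 1 := by
  have hd : u 0 * v 1 - u 1 * v 0 ≠ 0 := by
    intro hd
    rw [LinearIndependent.pair_iff] at h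
    have a := h (v 0) (-u 0) (by
      ext i; fin_cases i
      · simp; ring
      · simp; linarith)
    have b := h (v 1) (-u 1) (by
      ext i; fin_cases i
      · simp; linarith
      · simp; ring)
    have c := h 0 1 (by
      ext i; fin_cases i
      · simpa using a.1
      · simpa using b.1)
    exact one_ne_zero c.2
  obtain ⟨s, hs, hs2, hsA⟩ := gram_aux u v A hA hAeq₁ hAeq₂
  obtain ⟨t, ht, ht2, htB⟩ := gram_aux u v B hB hBeq₁ hBeq₂
  have hst : s = t := by
    rw [← sq_eq_sq₀ hs ht]; linarith
  subst hst
  have hU : IsUnit (!![u 0, v 0; u 1, v 1] : Matrix (Fin 2) (Fin 2) ℝ) := by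
    rw [Matrix.isUnit_iff_isUnit_det, Matrix.det_fin_two_of, isUnit_iff_ne_zero]
    intro h0
    apply hd
    linarith
  have hUt := (Matrix.isUnit_transpose (A := !![u 0, v 0; u 1, v 1])).2 hU
  have key : Bᵀ * B = Aᵀ * A := hUt.mul_left_cancel (hU.mul_right_cancel (htB.trans hsA.symm))
  have hAu : IsUnit A.det := by rw [hA]; exact isUnit_one
  constructor
  · calc (B * A⁻¹)ᵀ * (B * A⁻¹) = (A⁻¹)ᵀ * (Bᵀ * B) * A⁻¹ := by
          rw [Matrix.transpose_mul]; simp only [Matrix.mul_assoc]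
      _ = (A * A⁻¹)ᵀ * (A * A⁻¹) := by
          rw [key, Matrix.transpose_mul]; simp only [Matrix.mul_assoc]
      _ = 1 := by rw [Matrix.mul_nonsing_inv A hAu]; simp
  · rw [Matrix.det_mul, Matrix.det_nonsing_inv, hA, hB]; simp
end

section
/- Let (X,d) be a metric space, let π : X → Q be a surjection onto a set Q, and define the quotient pseudo-metric d_Q(p,q) = inf Σ_{i=1}^n d(x_i,y_i), where the infimum is over all chains x₁,y₁,…,x_n,y_n in X with π(x₁) = p, π(y_n) = q, and π(y_i) = π(x_{i+1}) for 1 ≤ i < n. Let A = {a ∈ X : there exists b ≠ a with π(b) = π(a)} be the union of the non-singleton fibers of π. Suppose x ∈ X and ε > 0 satisfy d(x,a) ≥ 3ε for all a ∈ A. Then for every z ∈ X with d(x,z) ≤ ε and every y ∈ X one has min{2ε, d(z,y)} ≤ d_Q(π(z),π(y)) ≤ d(z,y). In particular, d_Q(π(z),π(y)) = d(z,y) whenever z and y both lie in the closed ε-ball around x, so π restricts to an isometry of that ball onto its image in (Q,d_Q); that is, the quotient map is a local isometry at every point far from the collapsed sets. -/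
/-- The quotient pseudo-metric associated to a surjection `π : X → Q`:
`d_Q(p,q)` is the infimum of `Σᵢ d(xᵢ, yᵢ)` over all chains
`x₁, y₁, …, x_n, y_n` in `X` with `π x₁ = p`, `π y_n = q`, and
`π yᵢ = π x_{i+1}` for `1 ≤ i < n`. -/
noncomputable def quotDist {X Q : Type*} [MetricSpace X] (π : X → Q) (p q : Q) : ℝ :=
  sInf {r : ℝ | ∃ (n : ℕ) (x y : Fin (n + 1) → X),
    π (x 0) = p ∧ π (y (Fin.last n)) = q ∧
    (∀ i : Fin n, π (y i.castSucc) = π (x i.succ)) ∧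
    r = ∑ i, dist (x i) (y i)}

theorem quotDist_chain_aux {X Q : Type*} [MetricSpace X] (π : X → Q) (x : X) (ε : ℝ)
    (hfar : ∀ a : X, (∃ b : X, b ≠ a ∧ π b = π a) → 3 * ε ≤ dist x a)
    (z t : X) (hz : dist x z ≤ ε) (n : ℕ) :
    ∀ (w : X) (u v : Fin (n + 1) → X), π (u 0) = π w → π (v (Fin.last n)) = π t →
      (∀ i : Fin n, π (v i.castSucc) = π (u i.succ)) →
      min (2 * ε) (dist z t) ≤ dist z w + ∑ i, dist (u i) (v i) := by
  have key : ∀ a b : X, π b = π a → b = a ∨ 2 * ε ≤ dist z a := by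
    intro a b h
    by_cases hab : b = a
    · exact Or.inl hab
    · right
      have h1 := hfar a ⟨b, hab, h⟩
      have h2 := dist_triangle x z a
      linarith
  induction n with
  | zero =>
    intro w u v h0 h1 _
    change π (v 0) = π t at h1
    have hs : ∑ i, dist (u i) (v i) = dist (u 0) (v 0) :=
      Fin.sum_univ_one (fun i => dist (u i) (v i))
    rw [hs]
    have hd : 0 ≤ dist (u 0) (v 0) := dist_nonneg
    rcases key w _ h0 with h | h
    · have h3 := dist_triangle z w (v 0)
      rw [h]
      rcases key (v 0) t h1.symm with h' | h'
      · rw [h']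
        exact (min_le_right _ _).trans h3
      · exact (min_le_left _ _).trans (h'.trans h3)
    · exact (min_le_left _ _).trans (by linarith)
  | succ n ih =>
    intro w u v h0 h1 h2
    rcases key w _ h0 with h | h
    · have h3 := ih (v 0) (fun i => u i.succ) (fun i => v i.succ) (h2 0).symm
        (by simpa using h1) (fun i => by simpa using h2 i.succ)
      have h4 := dist_triangle z w (v 0)
      rw [Fin.sum_univ_succ, h]
      linarith
    · have hd : 0 ≤ ∑ i, dist (u i) (v i) := Finset.sum_nonneg fun _ _ => dist_nonneg
      exact (min_le_left _ _).trans (by linarith)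

/-- The quotient map onto the quotient pseudo-metric space is a local isometry at
every point far from the collapsed sets: if all points of `A` (the union of the
non-singleton fibers of `π`) are at distance at least `3ε` from `x`, then for every
`z` with `d(x,z) ≤ ε` and every `y`, one has
`min {2ε, d(z,y)} ≤ d_Q(π z, π y) ≤ d(z,y)`; in particular `d_Q(π z, π y) = d(z,y)`
whenever `z, y` both lie in the closed `ε`-ball around `x`. -/
theorem quotDist_local_isometry {X Q : Type*} [MetricSpace X] (π : X → Q)
    (hsurj : Function.Surjective π) (x : X) (ε : ℝ) (hε : 0 < ε)
    (hfar : ∀ a : X, (∃ b : X, b ≠ a ∧ π b = π a) → 3 * ε ≤ dist x a) :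
    (∀ z y : X, dist x z ≤ ε →
        min (2 * ε) (dist z y) ≤ quotDist π (π z) (π y) ∧
        quotDist π (π z) (π y) ≤ dist z y) ∧
    (∀ z y : X, dist x z ≤ ε → dist x y ≤ ε →
        quotDist π (π z) (π y) = dist z y) := by
  have main : ∀ z y : X, dist x z ≤ ε →
        min (2 * ε) (dist z y) ≤ quotDist π (π z) (π y) ∧
        quotDist π (π z) (π y) ≤ dist z y := by
    intro z y hz
    have hmem : dist z y ∈ {r : ℝ | ∃ (n : ℕ) (u v : Fin (n + 1) → X),
        π (u 0) = π z ∧ π (v (Fin.last n)) = π y ∧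
        (∀ i : Fin n, π (v i.castSucc) = π (u i.succ)) ∧
        r = ∑ i, dist (u i) (v i)} :=
      ⟨0, fun _ => z, fun _ => y, rfl, rfl, fun i => i.elim0, by simp⟩
    constructor
    · refine le_csInf ⟨_, hmem⟩ ?_
      rintro r ⟨n, u, v, h0, h1, h2, rfl⟩
      simpa using quotDist_chain_aux π x ε hfar z y hz n z u v h0 h1 h2
    · refine csInf_le ⟨0, ?_⟩ hmem
      rintro r ⟨n, u, v, h0, h1, h2, rfl⟩
      exact Finset.sum_nonneg fun _ _ => dist_nonneg
  refine ⟨main, fun z y hz hy => ?_⟩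
  obtain ⟨h1, h2⟩ := main z y hz
  have h3 := dist_triangle_left z y x
  rw [min_eq_right (by linarith)] at h1
  exact le_antisymm h2 h1
end
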